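/- Let d ≥ 1, δ > 0, and let γ̃ : (0,∞) → ℝ satisfy the radial kernel conditions with horizon δ in dimension d. Let x ∈ ℝ^d and let u : ℝ^d → ℝ be four times continuously differentiable on the closed ball B̄_δ(x), with M₄ := sup_{|y−x|≤δ} ‖D⁴u(y)‖ < ∞ (operator norm of the fourth derivative). Then the integral 2∫_{B_δ(x)} (u(y) − u(x)) γ̃(|y−x|) dy exists and |2∫_{B_δ(x)} (u(y) − u(x)) γ̃(|y−x|) dy − Δu(x)| ≤ (d/12) δ² M₄, where Δu(x) is the Laplacian of u at x. -/

import Mathlib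

open MeasureTheory Metric Set

noncomputable section

/-- Surface measure of the unit sphere in `ℝ^d`, expressed as `d` times the volume
of the unit ball. -/
def unitSphereArea (d : ℕ) : ℝ :=
  d * (volume (ball (0 : EuclideanSpace ℝ (Fin d)) 1)).toReal

/-- The radial kernel conditions with horizon `δ` in dimension `d`. -/
def RadialKernel (d : ℕ) (δ : ℝ) (γ : ℝ → ℝ) : Prop :=
  Measurable γ ∧ (∀ s, 0 < s → s < δ → 0 < γ s) ∧ (∀ s, δ ≤ s → γ s = 0) ∧
    IntegrableOn γ (Ioo 0 δ) ∧
    unitSphereArea d * (∫ s in Ioo 0 δ, s ^ (d + 1) * γ s) = d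

/-! The product of the kernel with an odd function of `y - x` integrates to zero over the ball, and
`h ↦ B h h` integrates to the second moment of the kernel times the mean of `B` over an orthonormal
basis. Pairing `x + h` with `x - h` in the Taylor expansion of `u` at `x` therefore leaves the
Laplacian and a fourth-order remainder of size at most `‖h‖ ^ 4 * M₄ / 12`, which is at most
`‖h‖ ^ 2 * δ ^ 2 * M₄ / 12` on the ball; the second moment is normalized to `d`. -/

section Taylor

variable {E F : Type*} [NormedAddCommGroup E] [NormedSpace ℝ E] [NormedAddCommGroup F]
  [NormedSpace ℝ F] [CompleteSpace F] {f : E → F} {x h : E} {r M : ℝ}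

open Nat in
theorem norm_map_add_sub_sum_iteratedFDeriv_le {n : ℕ}
    (hf : ∀ t ∈ Icc (0 : ℝ) 1, ContDiffAt ℝ (n + 1) f (x + t • h))
    (hM : ∀ t ∈ Icc (0 : ℝ) 1, ‖iteratedFDeriv ℝ (n + 1) f (x + t • h)‖ ≤ M) :
    ‖f (x + h) - ∑ k ∈ Finset.range (n + 1), (k ! : ℝ)⁻¹ • iteratedFDeriv ℝ k f x fun _ => h‖ ≤
      M * ‖h‖ ^ (n + 1) / (n + 1)! := by
  have hderiv : ∀ t ∈ Ioc (0 : ℝ) 1,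
      ‖(1 - t) ^ n • iteratedFDeriv ℝ (n + 1) f (x + t • h) fun _ => h‖ ≤
        (1 - t) ^ n * (M * ‖h‖ ^ (n + 1)) := by
    intro t ht
    have h1t : 0 ≤ 1 - t := sub_nonneg.2 ht.2
    rw [norm_smul, Real.norm_of_nonneg (pow_nonneg h1t n)]
    gcongr
    simpa using (iteratedFDeriv ℝ (n + 1) f (x + t • h)).le_of_opNorm_le
      (hM t (Ioc_subset_Icc_self ht)) fun _ => h
  have hweight : ∫ t in (0 : ℝ)..1, (1 - t) ^ n = ((n : ℝ) + 1)⁻¹ := by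
    simp [intervalIntegral.integral_comp_sub_left (fun t : ℝ => t ^ n)]
  have hremainder := intervalIntegral.norm_integral_le_of_norm_le zero_le_one
    (μ := volume) (Filter.Eventually.of_forall hderiv)
    (Continuous.intervalIntegrable (by fun_prop) 0 1)
  rw [intervalIntegral.integral_mul_const, hweight] at hremainder
  rw [map_add_eq_sum_add_integral_iteratedFDeriv hf, add_sub_cancel_left, norm_smul, norm_inv,
    Real.norm_natCast]
  calc (n ! : ℝ)⁻¹ * _ ≤ (n ! : ℝ)⁻¹ * (((n : ℝ) + 1)⁻¹ * (M * ‖h‖ ^ (n + 1))) := by gcongr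
    _ = M * ‖h‖ ^ (n + 1) / (n + 1)! := by
      push_cast [Nat.factorial_succ]
      field_simp

theorem add_smul_mem_ball (hh : h ∈ ball (0 : E) r) {t : ℝ} (ht : |t| ≤ 1) :
    x + t • h ∈ ball x r := by
  rw [mem_ball_zero_iff] at hh
  rw [mem_ball_iff_norm, add_sub_cancel_left, norm_smul]
  exact (mul_le_of_le_one_left (norm_nonneg h) ht).trans_lt hh

theorem norm_map_add_sub_sum_iteratedFDeriv_le_of_mem_ball {n : ℕ}
    (hf : ContDiffOn ℝ (n + 1) f (ball x r))
    (hM : ∀ y ∈ ball x r, ‖iteratedFDeriv ℝ (n + 1) f y‖ ≤ M) (hh : h ∈ ball (0 : E) r) :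
    ‖f (x + h) - ∑ k ∈ Finset.range (n + 1), (k.factorial : ℝ)⁻¹ •
        iteratedFDeriv ℝ k f x fun _ => h‖ ≤
      M * ‖h‖ ^ (n + 1) / (n + 1).factorial := by
  have hseg : ∀ t ∈ Icc (0 : ℝ) 1, x + t • h ∈ ball x r := fun t ht =>
    add_smul_mem_ball hh (abs_le.2 ⟨by linarith [ht.1], ht.2⟩)
  exact norm_map_add_sub_sum_iteratedFDeriv_le
    (fun t ht => hf.contDiffAt (isOpen_ball.mem_nhds (hseg t ht))) fun t ht => hM _ (hseg t ht)

theorem norm_add_sub_two_smul_sub_iteratedFDeriv_two_le (hf : ContDiffOn ℝ 4 f (ball x r))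
    (hM : ∀ y ∈ ball x r, ‖iteratedFDeriv ℝ 4 f y‖ ≤ M) (hh : h ∈ ball (0 : E) r) :
    ‖f (x + h) + f (x - h) - (2 : ℝ) • f x - iteratedFDeriv ℝ 2 f x fun _ => h‖ ≤
      M * ‖h‖ ^ 4 / 12 := by
  have hforward := norm_map_add_sub_sum_iteratedFDeriv_le_of_mem_ball (n := 3)
    (by exact_mod_cast hf) hM hh
  have hbackward := norm_map_add_sub_sum_iteratedFDeriv_le_of_mem_ball (n := 3) (h := -h)
    (by exact_mod_cast hf) hM (by simpa using hh)
  have hneg (k : ℕ) : (iteratedFDeriv ℝ k f x fun _ => -h) =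
      (-1 : ℝ) ^ k • iteratedFDeriv ℝ k f x fun _ => h := by
    simpa using (iteratedFDeriv ℝ k f x).map_smul_univ (fun _ => (-1 : ℝ)) fun _ => h
  simp only [hneg, norm_neg, ← sub_eq_add_neg] at hbackward
  refine (le_of_eq ?_).trans ((norm_add_le_of_le hforward hbackward).trans (le_of_eq ?_))
  · congr 1
    simp only [Finset.sum_range_succ, Finset.sum_range_zero, iteratedFDeriv_zero_apply,
      Nat.factorial]
    module
  · norm_num [Nat.factorial]
    ring

theorem exists_norm_map_add_sub_le_mul_norm {n : ℕ} (hf : ContDiffOn ℝ (n + 1) f (ball x r))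
    (hM : ∀ y ∈ ball x r, ‖iteratedFDeriv ℝ (n + 1) f y‖ ≤ M) :
    ∃ K, ∀ h ∈ ball (0 : E) r, ‖f (x + h) - f x‖ ≤ K * ‖h‖ := by
  refine ⟨M * r ^ n / (n + 1).factorial +
    ∑ k ∈ Finset.range n, ((k + 1).factorial : ℝ)⁻¹ * (‖iteratedFDeriv ℝ (k + 1) f x‖ * r ^ k),
    fun h hh => ?_⟩
  have htaylor := norm_map_add_sub_sum_iteratedFDeriv_le_of_mem_ball hf hM hh
  have hr : ‖h‖ ≤ r := (mem_ball_zero_iff.1 hh).le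
  have hM0 : 0 ≤ M := (norm_nonneg _).trans
    (hM x (mem_ball_self ((norm_nonneg h).trans_lt (mem_ball_zero_iff.1 hh))))
  simp only [Finset.sum_range_succ', Nat.factorial_zero, Nat.cast_one, inv_one, one_smul,
    iteratedFDeriv_zero_apply] at htaylor
  have hterm (k : ℕ) : ‖((k + 1).factorial : ℝ)⁻¹ • iteratedFDeriv ℝ (k + 1) f x fun _ => h‖ ≤
      ((k + 1).factorial : ℝ)⁻¹ * (‖iteratedFDeriv ℝ (k + 1) f x‖ * r ^ k) * ‖h‖ := by
    have hop := (iteratedFDeriv ℝ (k + 1) f x).le_opNorm fun _ => h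
    simp only [Finset.prod_const, Finset.card_univ, Fintype.card_fin] at hop
    rw [norm_smul, norm_inv, Real.norm_natCast, mul_assoc, mul_assoc]
    gcongr
    refine hop.trans ?_
    rw [pow_succ]
    gcongr
  calc ‖f (x + h) - f x‖
      ≤ M * ‖h‖ ^ (n + 1) / (n + 1).factorial + ‖∑ k ∈ Finset.range n,
          ((k + 1).factorial : ℝ)⁻¹ • iteratedFDeriv ℝ (k + 1) f x fun _ => h‖ := by
        refine (norm_le_norm_sub_add _ _).trans (add_le_add_left ((le_of_eq ?_).trans htaylor) _)
        congr 1
        abel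
    _ ≤ M * (r ^ n * ‖h‖) / (n + 1).factorial + ∑ k ∈ Finset.range n,
          ((k + 1).factorial : ℝ)⁻¹ * (‖iteratedFDeriv ℝ (k + 1) f x‖ * r ^ k) * ‖h‖ := by
        rw [pow_succ]
        gcongr
        exact norm_sum_le_of_le _ fun k _ => hterm k
    _ = _ := by rw [← Finset.sum_mul]; ring

end Taylor

theorem integrable_mul_of_abs_le_mul_abs {α : Type*} {_ : MeasurableSpace α} {μ : Measure α}
    {g w k : α → ℝ} {C : ℝ} (hwk : Integrable (fun a => w a * k a) μ)
    (hg : AEStronglyMeasurable g μ) (hw : AEStronglyMeasurable w μ)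
    (hgw : ∀ᵐ a ∂μ, |g a| ≤ C * |w a|) : Integrable (fun a => g a * k a) μ := by
  have hquot : ∀ᵐ a ∂μ, ‖g a / w a‖ ≤ |C| := by
    filter_upwards [hgw] with a ha
    rw [norm_div, Real.norm_eq_abs, Real.norm_eq_abs]
    refine div_le_of_le_mul₀ (abs_nonneg _) (abs_nonneg _) (ha.trans ?_)
    gcongr
    exact le_abs_self C
  refine (hwk.bdd_mul (hg.div₀ hw) hquot).congr ?_
  filter_upwards [hgw] with a ha
  rcases eq_or_ne (w a) 0 with hwa | hwa
  · have hga : g a = 0 := by simpa [hwa] using ha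
    simp [hga]
  · simp only [Pi.div_apply]
    field_simp

/-- Invariance of a measure on an inner product space under all linear isometric automorphisms,
the symmetry that makes the second moments of radial weights isotropic. -/
def IsOrthogonallyInvariant {E : Type*} [NormedAddCommGroup E] [InnerProductSpace ℝ E]
    [MeasurableSpace E] (μ : Measure E) : Prop :=
  ∀ e : E ≃ₗᵢ[ℝ] E, MeasurePreserving e μ μ

theorem isOrthogonallyInvariant_restrict_ball {E : Type*} [NormedAddCommGroup E]
    [InnerProductSpace ℝ E] [FiniteDimensional ℝ E] [MeasurableSpace E] [BorelSpace E] (r : ℝ) :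
    IsOrthogonallyInvariant (volume.restrict (ball (0 : E) r)) := fun e => by
  simpa using e.measurePreserving.restrict_preimage measurableSet_ball (s := ball 0 r)

theorem integrable_inner_mul_inner_mul_norm {E : Type*} [NormedAddCommGroup E]
    [InnerProductSpace ℝ E] [MeasurableSpace E] [BorelSpace E] {μ : Measure E} {f : ℝ → ℝ}
    (hf : Integrable (fun h => ‖h‖ ^ 2 * f ‖h‖) μ) (v w : E) :
    Integrable (fun h => inner ℝ v h * inner ℝ w h * f ‖h‖) μ := by
  refine integrable_mul_of_abs_le_mul_abs (C := ‖v‖ * ‖w‖) hf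
    (Continuous.aestronglyMeasurable (by fun_prop)) (Continuous.aestronglyMeasurable (by fun_prop))
    (Filter.Eventually.of_forall fun h => ?_)
  calc |inner ℝ v h * inner ℝ w h| ≤ (‖v‖ * ‖h‖) * (‖w‖ * ‖h‖) := by
        rw [abs_mul]
        gcongr <;> exact abs_real_inner_le_norm _ _
    _ = ‖v‖ * ‖w‖ * |‖h‖ ^ 2| := by rw [abs_of_nonneg (sq_nonneg _)]; ring

namespace IsOrthogonallyInvariant

open Module RealInnerProductSpace

variable {E : Type*} [NormedAddCommGroup E] [InnerProductSpace ℝ E] [MeasurableSpace E]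
  [BorelSpace E] {μ : Measure E} {f : ℝ → ℝ}

theorem integral_comp_mul_norm (hμ : IsOrthogonallyInvariant μ) (e : E ≃ₗᵢ[ℝ] E) (g : E → ℝ) :
    ∫ h, g (e h) * f ‖h‖ ∂μ = ∫ h, g h * f ‖h‖ ∂μ := by
  simpa only [e.norm_map] using
    (hμ e).integral_comp e.toHomeomorph.measurableEmbedding fun h => g h * f ‖h‖

theorem two_mul_integral_mul_norm (hμ : IsOrthogonallyInvariant μ) {g : E → ℝ}
    (hg : Integrable (fun h => g h * f ‖h‖) μ) :
    Integrable (fun h => (g h + g (-h)) * f ‖h‖) μ ∧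
      2 * ∫ h, g h * f ‖h‖ ∂μ = ∫ h, (g h + g (-h)) * f ‖h‖ ∂μ := by
  have hneg : Integrable (fun h => g (-h) * f ‖h‖) μ := by
    simpa only [Function.comp_def, LinearIsometryEquiv.coe_neg, norm_neg] using
      (hμ (LinearIsometryEquiv.neg ℝ)).integrable_comp_of_integrable hg
  simp only [add_mul]
  refine ⟨hg.add hneg, ?_⟩
  rw [integral_add hg hneg, two_mul]
  congr 1
  exact (hμ.integral_comp_mul_norm (LinearIsometryEquiv.neg ℝ) g).symm

theorem integral_inner_mul_inner_of_inner_eq_zero (hμ : IsOrthogonallyInvariant μ) {v w : E}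
    (hvw : ⟪v, w⟫ = 0) : ∫ h, ⟪v, h⟫ * ⟪w, h⟫ * f ‖h‖ ∂μ = 0 := by
  let e := (ℝ ∙ v)ᗮ.reflection
  have hv (h : E) : ⟪v, e h⟫ = -⟪v, h⟫ := by
    rw [← inner_neg_left, ← Submodule.reflection_orthogonalComplement_singleton_eq_neg (𝕜 := ℝ) v,
      ← e.inner_map_map v, Submodule.reflection_reflection]
  have hw (h : E) : ⟪w, e h⟫ = ⟪w, h⟫ := by
    have hw_mem : w ∈ (ℝ ∙ v)ᗮ := Submodule.mem_orthogonal_singleton_iff_inner_right.2 hvw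
    rw [← e.inner_map_map w, Submodule.reflection_reflection,
      Submodule.reflection_mem_subspace_eq_self hw_mem]
  have hodd := hμ.integral_comp_mul_norm (f := f) e fun h => ⟪v, h⟫ * ⟪w, h⟫
  simp only [hv, hw, neg_mul, integral_neg] at hodd
  linarith

theorem integral_inner_sq_eq_of_norm_eq (hμ : IsOrthogonallyInvariant μ) {v w : E}
    (hvw : ‖v‖ = ‖w‖) : ∫ h, ⟪v, h⟫ ^ 2 * f ‖h‖ ∂μ = ∫ h, ⟪w, h⟫ ^ 2 * f ‖h‖ ∂μ := by
  let e := (ℝ ∙ (v - w))ᗮ.reflection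
  have hw (h : E) : ⟪w, e h⟫ = ⟪v, h⟫ := by
    rw [← Submodule.reflection_sub hvw, e.inner_map_map]
  simpa only [hw] using hμ.integral_comp_mul_norm (f := f) e fun h => ⟪w, h⟫ ^ 2

theorem integral_inner_sq_of_norm_eq_one [FiniteDimensional ℝ E] (hμ : IsOrthogonallyInvariant μ)
    (hf : Integrable (fun h => ‖h‖ ^ 2 * f ‖h‖) μ) {v : E} (hv : ‖v‖ = 1) :
    ∫ h, ⟪v, h⟫ ^ 2 * f ‖h‖ ∂μ = (∫ h, ‖h‖ ^ 2 * f ‖h‖ ∂μ) / finrank ℝ E := by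
  let b := stdOrthonormalBasis ℝ E
  have : Nontrivial E := nontrivial_of_ne v 0 (norm_pos_iff.1 (hv ▸ one_pos))
  have hfinrank : (finrank ℝ E : ℝ) ≠ 0 := Nat.cast_ne_zero.2 finrank_pos.ne'
  have hsum : ∫ h, ‖h‖ ^ 2 * f ‖h‖ ∂μ = ∑ i, ∫ h, ⟪b i, h⟫ ^ 2 * f ‖h‖ ∂μ := by
    rw [← integral_finsetSum _ fun i _ => by
      simpa only [sq] using integrable_inner_mul_inner_mul_norm hf (b i) (b i)]
    simp only [← Finset.sum_mul, b.sum_sq_inner_right]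
  rw [hsum, Finset.sum_congr rfl fun i _ =>
    hμ.integral_inner_sq_eq_of_norm_eq ((b.norm_eq_one i).trans hv.symm)]
  simp [hfinrank]

theorem integral_bilinear_mul_norm [FiniteDimensional ℝ E] {ι : Type*} [Fintype ι]
    (hμ : IsOrthogonallyInvariant μ) (hf : Integrable (fun h => ‖h‖ ^ 2 * f ‖h‖) μ)
    (b : OrthonormalBasis ι ℝ E) (B : E →ₗ[ℝ] E →ₗ[ℝ] ℝ) :
    Integrable (fun h => B h h * f ‖h‖) μ ∧
      ∫ h, B h h * f ‖h‖ ∂μ =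
        (∫ h, ‖h‖ ^ 2 * f ‖h‖ ∂μ) / finrank ℝ E * ∑ i, B (b i) (b i) := by
  have hexpand (h : E) : B h h * f ‖h‖ =
      ∑ i, ∑ j, B (b i) (b j) * (⟪b i, h⟫ * ⟪b j, h⟫ * f ‖h‖) := by
    have hB : B h h = ∑ j, ∑ i, ⟪b j, h⟫ * (⟪b i, h⟫ * B (b i) (b j)) := by
      conv_lhs => rw [← b.sum_repr' h]
      simp only [map_sum, map_smul, LinearMap.sum_apply, LinearMap.smul_apply, smul_eq_mul,
        Finset.mul_sum]
    rw [hB, Finset.sum_comm]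
    simp only [Finset.sum_mul]
    exact Finset.sum_congr rfl fun i _ => Finset.sum_congr rfl fun j _ => by ring
  have hint (i j : ι) : Integrable (fun h => B (b i) (b j) * (⟪b i, h⟫ * ⟪b j, h⟫ * f ‖h‖)) μ :=
    (integrable_inner_mul_inner_mul_norm hf (b i) (b j)).const_mul _
  have hrow (i : ι) : ∑ j, ∫ h, B (b i) (b j) * (⟪b i, h⟫ * ⟪b j, h⟫ * f ‖h‖) ∂μ =
      (∫ h, ‖h‖ ^ 2 * f ‖h‖ ∂μ) / finrank ℝ E * B (b i) (b i) := by
    simp only [integral_const_mul]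
    rw [Finset.sum_eq_single i, ← hμ.integral_inner_sq_of_norm_eq_one hf (b.norm_eq_one i),
      mul_comm]
    · simp only [sq]
    · intro j _ hji
      rw [hμ.integral_inner_mul_inner_of_inner_eq_zero (b.inner_eq_zero hji.symm), mul_zero]
    · simp
  simp only [hexpand]
  refine ⟨integrable_finsetSum _ fun i _ => integrable_finsetSum _ fun j _ => hint i j, ?_⟩
  rw [integral_finsetSum _ fun i _ => integrable_finsetSum _ fun j _ => hint i j, Finset.mul_sum]
  exact Finset.sum_congr rfl fun i _ => (integral_finsetSum _ fun j _ => hint i j).trans (hrow i)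

end IsOrthogonallyInvariant

section Nonlocal

open Module InnerProductSpace

variable {E : Type*} [NormedAddCommGroup E] [InnerProductSpace ℝ E] [FiniteDimensional ℝ E]
  [MeasurableSpace E] [BorelSpace E] {δ : ℝ} {γ : ℝ → ℝ} {x : E} {u : E → ℝ} {M₄ : ℝ}

theorem integrableOn_ball_norm_sq_mul
    (hγ : IntegrableOn (fun h : E => ‖h‖ * γ ‖h‖) (ball 0 δ)) :
    IntegrableOn (fun h : E => ‖h‖ ^ 2 * γ ‖h‖) (ball 0 δ) := by
  refine integrable_mul_of_abs_le_mul_abs (C := δ) hγ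
    (Continuous.aestronglyMeasurable (by fun_prop)) (Continuous.aestronglyMeasurable (by fun_prop))
    (ae_restrict_of_forall_mem measurableSet_ball fun h hh => ?_)
  rw [abs_of_nonneg (sq_nonneg _), abs_norm, sq]
  exact mul_le_mul_of_nonneg_right (mem_ball_zero_iff.1 hh).le (norm_nonneg h)

theorem integrableOn_ball_sub_mul_norm {n : ℕ} {M : ℝ}
    (hγ : IntegrableOn (fun h : E => ‖h‖ * γ ‖h‖) (ball 0 δ))
    (hu : ContDiffOn ℝ (n + 1) u (ball x δ))
    (hM : ∀ y ∈ ball x δ, ‖iteratedFDeriv ℝ (n + 1) u y‖ ≤ M) :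
    IntegrableOn (fun h => (u (x + h) - u x) * γ ‖h‖) (ball 0 δ) := by
  obtain ⟨K, hK⟩ := exists_norm_map_add_sub_le_mul_norm hu hM
  have hcont : ContinuousOn (fun h => u (x + h) - u x) (ball 0 δ) :=
    (hu.continuousOn.comp (by fun_prop) fun h hh => by simpa using hh).sub continuousOn_const
  refine integrable_mul_of_abs_le_mul_abs (C := K) hγ
    (hcont.aestronglyMeasurable measurableSet_ball) (Continuous.aestronglyMeasurable (by fun_prop))
    (ae_restrict_of_forall_mem measurableSet_ball fun h hh => ?_)
  simpa using hK h hh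

theorem integral_ball_mul_sub_laplacian
    (hγ : IntegrableOn (fun h : E => ‖h‖ * γ ‖h‖) (ball 0 δ))
    (hu : IntegrableOn (fun h => (u (x + h) - u x) * γ ‖h‖) (ball 0 δ)) :
    2 * (∫ h in ball 0 δ, (u (x + h) - u x) * γ ‖h‖) -
        (∫ h in ball (0 : E) δ, ‖h‖ ^ 2 * γ ‖h‖) / finrank ℝ E * Laplacian.laplacian u x =
      ∫ h in ball 0 δ, (u (x + h) + u (x - h) - (2 : ℝ) • u x -
        iteratedFDeriv ℝ 2 u x fun _ => h) * γ ‖h‖ := by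
  have hball : IsOrthogonallyInvariant (volume.restrict (ball (0 : E) δ)) :=
    isOrthogonallyInvariant_restrict_ball δ
  have hdiag (h : E) : bilinearIteratedFDerivTwo ℝ u x h h = iteratedFDeriv ℝ 2 u x fun _ => h := by
    rw [bilinearIteratedFDerivTwo_eq_iteratedFDeriv]
    congr 1
    ext i
    fin_cases i <;> rfl
  obtain ⟨hsymm, hpair⟩ := hball.two_mul_integral_mul_norm hu
  obtain ⟨hquad, htrace⟩ := hball.integral_bilinear_mul_norm (integrableOn_ball_norm_sq_mul hγ)
    (stdOrthonormalBasis ℝ E) (bilinearIteratedFDerivTwo ℝ u x)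
  rw [laplacian_eq_iteratedFDeriv_stdOrthonormalBasis]
  simp only [bilinearIteratedFDerivTwo_eq_iteratedFDeriv u x (stdOrthonormalBasis ℝ E _)] at htrace
  rw [hpair, ← htrace, ← integral_sub hsymm hquad]
  congr 1 with h
  rw [hdiag, ← sub_eq_add_neg, smul_eq_mul]
  ring

theorem abs_integral_ball_second_difference_sub_le
    (hγ : IntegrableOn (fun h : E => ‖h‖ * γ ‖h‖) (ball 0 δ))
    (hu : ContDiffOn ℝ 4 u (ball x δ)) (hM₄ : ∀ y ∈ ball x δ, ‖iteratedFDeriv ℝ 4 u y‖ ≤ M₄) :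
    |∫ h in ball 0 δ, (u (x + h) + u (x - h) - (2 : ℝ) • u x -
        iteratedFDeriv ℝ 2 u x fun _ => h) * γ ‖h‖| ≤
      δ ^ 2 / 12 * M₄ * ∫ h in ball (0 : E) δ, ‖h‖ ^ 2 * |γ ‖h‖| := by
  have hmoment : IntegrableOn (fun h : E => ‖h‖ ^ 2 * |γ ‖h‖|) (ball 0 δ) := by
    simpa [IntegrableOn, abs_mul] using (integrableOn_ball_norm_sq_mul hγ).abs
  rw [← Real.norm_eq_abs, ← integral_const_mul]
  refine norm_integral_le_of_norm_le (hmoment.const_mul _)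
    (ae_restrict_of_forall_mem measurableSet_ball fun h hh => ?_)
  have hhδ : ‖h‖ < δ := mem_ball_zero_iff.1 hh
  have hM0 : 0 ≤ M₄ :=
    (norm_nonneg _).trans (hM₄ x (mem_ball_self ((norm_nonneg h).trans_lt hhδ)))
  rw [norm_mul, Real.norm_eq_abs (γ _), ← mul_assoc]
  gcongr
  calc _ ≤ M₄ * ‖h‖ ^ 4 / 12 := norm_add_sub_two_smul_sub_iteratedFDeriv_two_le hu hM₄ hh
    _ = ‖h‖ ^ 2 / 12 * M₄ * ‖h‖ ^ 2 := by ring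
    _ ≤ δ ^ 2 / 12 * M₄ * ‖h‖ ^ 2 := by gcongr

theorem stmt0_general (hγ : IntegrableOn (fun h : E => ‖h‖ * γ ‖h‖) (ball 0 δ))
    (hu : ContDiffOn ℝ 4 u (ball x δ)) (hM₄ : ∀ y ∈ ball x δ, ‖iteratedFDeriv ℝ 4 u y‖ ≤ M₄) :
    IntegrableOn (fun y => (u y - u x) * γ ‖y - x‖) (ball x δ) ∧
      |2 * (∫ y in ball x δ, (u y - u x) * γ ‖y - x‖) -
          (∫ h in ball (0 : E) δ, ‖h‖ ^ 2 * γ ‖h‖) / finrank ℝ E * Laplacian.laplacian u x| ≤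
        (∫ h in ball (0 : E) δ, ‖h‖ ^ 2 * |γ ‖h‖|) / 12 * δ ^ 2 * M₄ := by
  have htranslate := measurePreserving_add_left (volume : Measure E) x
  have hemb := measurableEmbedding_addLeft x
  have hint : IntegrableOn (fun h => (u (x + h) - u x) * γ ‖h‖) (ball 0 δ) :=
    integrableOn_ball_sub_mul_norm (n := 3) hγ (by exact_mod_cast hu) hM₄
  have hpre : (x + ·) ⁻¹' ball x δ = ball (0 : E) δ := by simp
  rw [← htranslate.integrableOn_comp_preimage hemb, ← htranslate.setIntegral_preimage_emb hemb,
    hpre]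
  simp only [Function.comp_def, add_sub_cancel_left]
  rw [integral_ball_mul_sub_laplacian hγ hint]
  exact ⟨hint, (abs_integral_ball_second_difference_sub_le hγ hu hM₄).trans_eq (by ring)⟩

end Nonlocal

theorem setIntegral_ball_fun_norm_addHaar {E F : Type*} [NormedAddCommGroup E] [NormedSpace ℝ E]
    [Nontrivial E] [FiniteDimensional ℝ E] [MeasurableSpace E] [BorelSpace E]
    [NormedAddCommGroup F] [NormedSpace ℝ F] (μ : Measure E) [μ.IsAddHaarMeasure] (f : ℝ → F)
    (r : ℝ) :
    ∫ x in ball (0 : E) r, f ‖x‖ ∂μ = Module.finrank ℝ E • μ.real (ball 0 1) •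
      ∫ s in Ioo 0 r, s ^ (Module.finrank ℝ E - 1) • f s := by
  have hball : (ball (0 : E) r).indicator (fun x => f ‖x‖) = fun x => (Iio r).indicator f ‖x‖ := by
    ext x
    simp [indicator]
  rw [← integral_indicator measurableSet_ball, hball, integral_fun_norm_addHaar, ← Ioi_inter_Iio,
    ← setIntegral_indicator measurableSet_Iio, indicator_smul]

namespace RadialKernel

variable {d : ℕ} {δ : ℝ} {γ : ℝ → ℝ}

theorem integrableOn_norm_mul (hd : 1 ≤ d) (hγ : RadialKernel d δ γ) :
    IntegrableOn (fun h : EuclideanSpace ℝ (Fin d) => ‖h‖ * γ ‖h‖) (ball 0 δ) := by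
  have : Nonempty (Fin d) := ⟨⟨0, hd⟩⟩
  obtain ⟨-, -, -, hint, -⟩ := hγ
  rw [integrableOn_fun_norm_addHaar volume (f := fun s => s * γ s)]
  simp only [smul_eq_mul, ← mul_assoc]
  exact hint.continuousOn_mul_of_subset (K := Icc 0 δ) (by fun_prop) isCompact_Icc
    measurableSet_Ioo Ioo_subset_Icc_self

theorem integral_norm_sq_mul (hd : 1 ≤ d) (hγ : RadialKernel d δ γ) :
    ∫ h in ball (0 : EuclideanSpace ℝ (Fin d)) δ, ‖h‖ ^ 2 * γ ‖h‖ = d := by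
  have : Nonempty (Fin d) := ⟨⟨0, hd⟩⟩
  obtain ⟨-, -, -, -, hmoment⟩ := hγ
  rw [setIntegral_ball_fun_norm_addHaar volume fun s => s ^ 2 * γ s, finrank_euclideanSpace,
    Fintype.card_fin, nsmul_eq_mul]
  simp only [smul_eq_mul, ← mul_assoc, ← pow_add, show d - 1 + 2 = d + 1 by lia]
  exact hmoment

theorem integral_norm_sq_mul_abs (hd : 1 ≤ d) (hγ : RadialKernel d δ γ) :
    ∫ h in ball (0 : EuclideanSpace ℝ (Fin d)) δ, ‖h‖ ^ 2 * |γ ‖h‖| = d := by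
  rw [← hγ.integral_norm_sq_mul hd]
  refine setIntegral_congr_fun measurableSet_ball fun h hh => ?_
  rcases eq_or_ne h 0 with rfl | hne
  · simp
  · simp only [abs_of_pos (hγ.2.1 ‖h‖ (norm_pos_iff.2 hne) (mem_ball_zero_iff.1 hh))]

end RadialKernel

theorem iteratedFDerivWithin_closedBall {E F : Type*} [NormedAddCommGroup E] [NormedSpace ℝ E]
    [NormedAddCommGroup F] [NormedSpace ℝ F] {f : E → F} {x y : E} {r : ℝ} (n : ℕ)
    (hy : y ∈ ball x r) :
    iteratedFDerivWithin ℝ n f (closedBall x r) y = iteratedFDeriv ℝ n f y := by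
  rw [← iteratedFDerivWithin_univ]
  exact iteratedFDerivWithin_congr_set (Filter.eventuallyEq_univ.2
    (Filter.mem_of_superset (isOpen_ball.mem_nhds hy) ball_subset_closedBall)) n

theorem laplacian_eq_sum_iteratedFDerivWithin_closedBall {E F ι : Type*} [NormedAddCommGroup E]
    [InnerProductSpace ℝ E] [FiniteDimensional ℝ E] [NormedAddCommGroup F] [NormedSpace ℝ F]
    [Fintype ι] (b : OrthonormalBasis ι ℝ E) (f : E → F) {x : E} {r : ℝ} (hr : 0 < r) :
    Laplacian.laplacian f x =
      ∑ i, iteratedFDerivWithin ℝ 2 f (closedBall x r) x ![b i, b i] := by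
  rw [InnerProductSpace.laplacian_eq_iteratedFDeriv_orthonormalBasis f b,
    iteratedFDerivWithin_closedBall 2 (mem_ball_self hr)]

/-- second-order consistency of the nonlocal operator with the Laplacian. -/
theorem stmt0 (d : ℕ) (hd : 1 ≤ d) (δ : ℝ) (hδ : 0 < δ) (γ : ℝ → ℝ)
    (hγ : RadialKernel d δ γ)
    (x : EuclideanSpace ℝ (Fin d)) (u : EuclideanSpace ℝ (Fin d) → ℝ)
    (hu : ContDiffOn ℝ 4 u (closedBall x δ)) (M₄ : ℝ)
    (hM₄ : ∀ y ∈ closedBall x δ, ‖iteratedFDerivWithin ℝ 4 u (closedBall x δ) y‖ ≤ M₄) :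
    IntegrableOn (fun y => (u y - u x) * γ ‖y - x‖) (ball x δ) ∧
      |2 * (∫ y in ball x δ, (u y - u x) * γ ‖y - x‖) -
          ∑ i : Fin d, iteratedFDerivWithin ℝ 2 u (closedBall x δ) x
            ![EuclideanSpace.single i 1, EuclideanSpace.single i 1]| ≤
        (d / 12) * δ ^ 2 * M₄ := by
  have hd0 : (d : ℝ) ≠ 0 := Nat.cast_ne_zero.2 (Nat.one_le_iff_ne_zero.1 hd)
  simpa only [hγ.integral_norm_sq_mul hd, hγ.integral_norm_sq_mul_abs hd,
    finrank_euclideanSpace_fin, div_self hd0, one_mul, EuclideanSpace.basisFun_apply,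
    laplacian_eq_sum_iteratedFDerivWithin_closedBall (EuclideanSpace.basisFun (Fin d) ℝ) u hδ]
    using stmt0_general (hγ.integrableOn_norm_mul hd) (hu.mono ball_subset_closedBall) fun y hy =>
      (iteratedFDerivWithin_closedBall (f := u) 4 hy) ▸ hM₄ y (ball_subset_closedBall hy)
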